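/- For n ≥ 3, the center of the braid group B_n is the subgroup generated by the full twist (σ_1 σ_2 ⋯ σ_{n−1})^n, and this subgroup is infinite cyclic. -/

import Mathlib

/-- The braid relations on generators `σ_1, …, σ_{n-1}` (generator `i : Fin (n-1)`
corresponds to `σ_{i+1}`): `σ_i σ_{i+1} σ_i = σ_{i+1} σ_i σ_{i+1}` and
`σ_i σ_j = σ_j σ_i` for `|i - j| ≥ 2`. -/
def braidRels (n : ℕ) : Set (FreeGroup (Fin (n - 1))) :=
  { r | (∃ i j : Fin (n - 1), (i : ℕ) + 1 = (j : ℕ) ∧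
          r = FreeGroup.of i * FreeGroup.of j * FreeGroup.of i *
              (FreeGroup.of j * FreeGroup.of i * FreeGroup.of j)⁻¹) ∨
        (∃ i j : Fin (n - 1), (i : ℕ) + 2 ≤ (j : ℕ) ∧
          r = FreeGroup.of i * FreeGroup.of j * (FreeGroup.of j * FreeGroup.of i)⁻¹) }

/-- The braid group `B_n`, presented on `σ_1, …, σ_{n-1}` with the braid relations. -/
abbrev BraidGroup (n : ℕ) := PresentedGroup (braidRels n)

/-- The braid generator `σ_k` (`1 ≤ k ≤ n-1`, 1-based); junk value `1` out of range. -/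
def braidSigma (n k : ℕ) : BraidGroup n :=
  if h : k - 1 < n - 1 then PresentedGroup.of (⟨k - 1, h⟩ : Fin (n - 1)) else 1

/-- The pure braid generator
`a_{ij} = (σ_{j-1} σ_{j-2} ⋯ σ_{i+1}) σ_i² (σ_{j-1} σ_{j-2} ⋯ σ_{i+1})⁻¹`. -/
def braidA (n i j : ℕ) : BraidGroup n :=
  ((List.range (j - 1 - i)).map (fun t => braidSigma n (j - 1 - t))).prod *
    (braidSigma n i) ^ 2 *
    (((List.range (j - 1 - i)).map (fun t => braidSigma n (j - 1 - t))).prod)⁻¹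

/-!
The proof is Garside's, and takes place in the monoid of positive braids. Rewriting one word into
another along the relations, one shows by induction on the length that the two sides of the
relation between two generators are their least common right multiple; this only needs that no
three generators are pairwise joined by braid relations. Hence the monoid is left cancellative. If
`m ≠ 1` satisfies `σ_i m = m σ_{f(i)}` for all `i`, then some generator divides `m`, therefore so
do its neighbours, and finally all generators do, so that `m` is a multiple of their least common
multiple `Δ`. Since `σ_i Δ = Δ σ_{n-i}`, dividing a central `m ≠ 1` by `Δ` leaves an element of the
same kind, which is not `1` because `Δ` itself is not central. So `m` is a multiple of `Δ²`, and the
center of the monoid is generated by `Δ²`. The full twist is central of the same length as `Δ²`,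
hence equal to it.

Every generator divides the central element `Δ²`, so inverting `Δ²` inverts all of them. The braid
group is therefore this localization, in which the monoid embeds by cancellativity, and its center
can be read off from that of the monoid.
-/

/-! ### Simply laced Artin monoids -/

/-- The relations of the simply laced Artin monoid of a graph: the braid relation for adjacent
generators, commutation for distinct non-adjacent ones. -/
inductive ArtinRel {ι : Type*} (G : SimpleGraph ι) : FreeMonoid ι → FreeMonoid ι → Prop
  | braid {a b : ι} (h : G.Adj a b) :
      ArtinRel G (.of a * (.of b * .of a)) (.of b * (.of a * .of b))
  | comm {a b : ι} (h : Gᶜ.Adj a b) : ArtinRel G (.of a * .of b) (.of b * .of a)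

/-- The simply laced Artin monoid with Coxeter graph `G`; for a path graph this is the monoid of
positive braids. -/
abbrev ArtinMonoid {ι : Type*} (G : SimpleGraph ι) := PresentedMonoid (ArtinRel G)

namespace ArtinMonoid

variable {ι : Type*} {G : SimpleGraph ι} {a b c : ι}

/-- The standard generators of the Artin monoid. -/
def gen (a : ι) : ArtinMonoid G := PresentedMonoid.of _ a

theorem gen_braid (h : G.Adj a b) :
    (gen a * (gen b * gen a) : ArtinMonoid G) = gen b * (gen a * gen b) :=
  PresentedMonoid.mk_eq_mk_of_rel (.braid h)

theorem gen_comm (h : Gᶜ.Adj a b) : (gen a * gen b : ArtinMonoid G) = gen b * gen a :=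
  PresentedMonoid.mk_eq_mk_of_rel (.comm h)

theorem gen_braid_mul (h : G.Adj a b) (x : ArtinMonoid G) :
    gen a * (gen b * (gen a * x)) = gen b * (gen a * (gen b * x)) := by
  simpa only [mul_assoc] using congrArg (· * x) (gen_braid h)

theorem gen_comm_mul (h : Gᶜ.Adj a b) (x : ArtinMonoid G) :
    gen a * (gen b * x) = gen b * (gen a * x) := by
  simpa only [mul_assoc] using congrArg (· * x) (gen_comm h)

/-- The universal property of the Artin monoid. -/
def lift {M : Type*} [Monoid M] (f : ι → M)
    (hbraid : ∀ a b, G.Adj a b → f a * (f b * f a) = f b * (f a * f b))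
    (hcomm : ∀ a b, Gᶜ.Adj a b → f a * f b = f b * f a) : ArtinMonoid G →* M :=
  PresentedMonoid.lift f <| by
    rintro _ _ (h | h)
    · simpa using hbraid _ _ h
    · simpa using hcomm _ _ h

@[elab_as_elim]
theorem gen_induction {p : ArtinMonoid G → Prop} (one : p 1)
    (gen_mul : ∀ a x, p x → p (gen a * x)) (x : ArtinMonoid G) : p x := by
  induction x using PresentedMonoid.inductionOn with | _ w
  induction w using FreeMonoid.inductionOn' with
  | one => exact one
  | of_mul a w ih => exact gen_mul a _ ih

theorem commute_of_forall_gen {z : ArtinMonoid G} (h : ∀ a, Commute (gen a) z)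
    (x : ArtinMonoid G) : Commute x z := by
  induction x using gen_induction with
  | one => exact .one_left z
  | gen_mul a x hx => exact (h a).mul_left hx

theorem eq_one_or_exists_eq_gen_mul (x : ArtinMonoid G) : x = 1 ∨ ∃ a y, x = gen a * y := by
  induction x using gen_induction with
  | one => exact .inl rfl
  | gen_mul a x _ => exact .inr ⟨a, x, rfl⟩

/-- The word length, as a homomorphism to the multiplicative copy of `ℕ`. -/
def lenHom : ArtinMonoid G →* Multiplicative ℕ :=
  lift (fun _ ↦ .ofAdd 1) (fun _ _ _ ↦ rfl) (fun _ _ _ ↦ rfl)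

/-- The common length of all words representing an element of the Artin monoid. -/
def len (x : ArtinMonoid G) : ℕ := (lenHom x).toAdd

@[simp]
theorem len_one : len (1 : ArtinMonoid G) = 0 := by simp [len]

@[simp]
theorem len_mul (x y : ArtinMonoid G) : len (x * y) = len x + len y := by simp [len]

@[simp]
theorem len_pow (x : ArtinMonoid G) (k : ℕ) : len (x ^ k) = k * len x := by simp [len]

@[simp]
theorem len_gen (a : ι) : len (gen a : ArtinMonoid G) = 1 := rfl

theorem len_gen_mul (a : ι) (x : ArtinMonoid G) : len (gen a * x) = len x + 1 := by
  rw [len_mul, len_gen, add_comm]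

theorem len_mk (w : FreeMonoid ι) : len (PresentedMonoid.mk (ArtinRel G) w) = w.length := by
  induction w using FreeMonoid.inductionOn' with
  | one => exact len_one
  | of_mul a w ih =>
    rw [map_mul, len_mul, ih, FreeMonoid.length_mul]
    rfl

theorem length_eq_of_rel {x y : FreeMonoid ι} (h : ConGen.Rel (ArtinRel G) x y) :
    x.length = y.length := by
  rw [← len_mk (G := G), ← len_mk (G := G), PresentedMonoid.mk_eq_mk_iff.2 h]

theorem of_mul_inj {x y : FreeMonoid ι} (h : FreeMonoid.of a * x = .of b * y) : a = b ∧ x = y :=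
  List.cons.inj h

/-- The equation `gen a * u = gen b * v` is a right multiple of the defining relation between
`gen a` and `gen b`, whose two sides are thus the least common multiple of these generators. -/
inductive LcmFactors : ι → ι → ArtinMonoid G → ArtinMonoid G → Prop
  | refl (a : ι) (w : ArtinMonoid G) : LcmFactors a a w w
  | braid {a b : ι} (h : G.Adj a b) (w : ArtinMonoid G) :
      LcmFactors a b (gen b * (gen a * w)) (gen a * (gen b * w))
  | comm {a b : ι} (h : Gᶜ.Adj a b) (w : ArtinMonoid G) :
      LcmFactors a b (gen b * w) (gen a * w)

namespace LcmFactors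

variable {u v w : ArtinMonoid G}

theorem symm (h : LcmFactors a b u v) : LcmFactors b a v u := by
  cases h with
  | refl => exact .refl _ _
  | braid h w => exact .braid h.symm w
  | comm h w => exact .comm h.symm w

theorem mul_right (h : LcmFactors a b u v) (y : ArtinMonoid G) :
    LcmFactors a b (u * y) (v * y) := by
  cases h with
  | refl => exact .refl _ _
  | braid h w => simpa only [mul_assoc] using .braid h (w * y)
  | comm h w => simpa only [mul_assoc] using .comm h (w * y)

theorem eq_of_self (h : LcmFactors a a u v) : u = v := by
  cases h with
  | refl => rfl
  | braid h => exact absurd rfl h.ne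
  | comm h => exact absurd rfl h.ne

theorem exists_of_adj (hab : G.Adj a b) (h : LcmFactors a b u v) :
    ∃ w, u = gen b * (gen a * w) ∧ v = gen a * (gen b * w) := by
  cases h with
  | refl => exact absurd rfl hab.ne
  | braid _ w => exact ⟨w, rfl, rfl⟩
  | comm h => exact absurd hab h.2

theorem exists_of_compl_adj (hab : Gᶜ.Adj a b) (h : LcmFactors a b u v) :
    ∃ w, u = gen b * w ∧ v = gen a * w := by
  cases h with
  | refl => exact absurd rfl hab.ne
  | braid h => exact absurd h hab.2
  | comm _ w => exact ⟨w, rfl, rfl⟩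

end LcmFactors

theorem eq_or_adj_or_compl_adj (G : SimpleGraph ι) (a b : ι) :
    a = b ∨ G.Adj a b ∨ Gᶜ.Adj a b := by
  rw [SimpleGraph.compl_adj]
  tauto

/-- Two generators have the expected least common multiple, as far as common multiples of length
at most `L` are concerned: the inductive hypothesis in the proof of Garside's lemma. -/
def LcmBelow (G : SimpleGraph ι) (L : ℕ) : Prop :=
  ∀ ⦃a b : ι⦄ ⦃u v : ArtinMonoid G⦄, len u < L → gen a * u = gen b * v → LcmFactors a b u v

theorem lcmFactors_of_artinRel {x y u v : FreeMonoid ι} (h : ArtinRel G x y)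
    (hx : x = .of a * u) (hy : y = .of b * v) :
    LcmFactors a b (PresentedMonoid.mk (ArtinRel G) u) (PresentedMonoid.mk _ v) := by
  cases h with
  | braid h =>
    obtain ⟨rfl, rfl⟩ := of_mul_inj hx
    obtain ⟨rfl, rfl⟩ := of_mul_inj hy
    exact .braid h 1
  | comm h =>
    obtain ⟨rfl, rfl⟩ := of_mul_inj hx
    obtain ⟨rfl, rfl⟩ := of_mul_inj hy
    exact .comm h 1

namespace LcmBelow

variable {L : ℕ} {x y u v w : ArtinMonoid G}

theorem lcmFactors_of_adj_adj (hL : LcmBelow G L) (hG : G.CliqueFree 3) (hab : G.Adj a b)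
    (hbc : G.Adj b c) (hx : len x + 2 = L)
    (h : gen a * (gen b * x) = gen c * (gen b * y)) :
    LcmFactors a c (gen b * (gen a * x)) (gen b * (gen c * y)) := by
  have hbx : len (gen b * x) < L := by rw [len_gen_mul]; omega
  rcases eq_or_adj_or_compl_adj G a c with rfl | hac | hac
  · obtain rfl := (hL (by omega) (hL hbx h).eq_of_self).eq_of_self
    exact .refl _ _
  · classical exact (hG _ (SimpleGraph.is3Clique_triple_iff.2 ⟨hab, hac, hbc⟩)).elim
  · obtain ⟨p, hp, hp'⟩ := (hL hbx h).exists_of_compl_adj hac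
    obtain ⟨q, rfl, rfl⟩ := (hL (by omega) hp).exists_of_adj hbc
    simp only [len_gen_mul] at hx
    obtain ⟨r, hr, rfl⟩ :=
      (hL (by simp only [len_gen_mul]; omega) hp'.symm).exists_of_adj hab
    have hqr : gen c * q = gen a * r :=
      (hL (by rw [len_gen_mul]; omega) hr).eq_of_self
    obtain ⟨z, rfl, rfl⟩ := (hL (by omega) hqr).exists_of_compl_adj hac.symm
    convert LcmFactors.comm hac (gen b * (gen c * (gen a * (gen b * z)))) using 1
    · rw [gen_comm_mul hac, gen_braid_mul hab, gen_braid_mul hbc]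
    · rw [gen_comm_mul hac.symm, gen_braid_mul hbc.symm, gen_braid_mul hab.symm,
        gen_comm_mul hac]

theorem lcmFactors_of_adj_compl (hL : LcmBelow G L) (hab : G.Adj a b) (hbc : Gᶜ.Adj b c)
    (hx : len x + 2 = L) (h : gen a * (gen b * x) = gen c * y) :
    LcmFactors a c (gen b * (gen a * x)) (gen b * y) := by
  have hbx : len (gen b * x) < L := by rw [len_gen_mul]; omega
  rcases eq_or_adj_or_compl_adj G a c with rfl | hac | hac
  · exact absurd hab.symm hbc.2
  · obtain ⟨z, hz, rfl⟩ := (hL hbx h).exists_of_adj hac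
    obtain ⟨t, rfl, ht⟩ := (hL (by omega) hz).exists_of_compl_adj hbc
    have hlen := congrArg len ht
    simp only [len_gen_mul] at hx hlen
    obtain ⟨q, rfl, rfl⟩ := (hL (by omega) ht).exists_of_adj hab
    convert LcmFactors.braid hac (gen b * (gen a * (gen c * q))) using 1
    · rw [gen_braid_mul hac, gen_comm_mul hbc, gen_comm_mul hbc.symm q, gen_braid_mul hab.symm]
    · rw [gen_comm_mul hbc.symm, gen_braid_mul hab.symm, gen_braid_mul hac q, gen_comm_mul hbc]
  · obtain ⟨z, hz, rfl⟩ := (hL hbx h).exists_of_compl_adj hac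
    obtain ⟨t, rfl, rfl⟩ := (hL (by omega) hz).exists_of_compl_adj hbc
    convert LcmFactors.comm hac (gen b * (gen a * t)) using 1
    · rw [gen_comm_mul hac, gen_comm_mul hbc]
    · rw [gen_braid_mul hab.symm]

theorem lcmFactors_of_compl_compl (hL : LcmBelow G L) (hab : Gᶜ.Adj a b) (hbc : Gᶜ.Adj b c)
    (hx : len x < L) (h : gen a * x = gen c * y) : LcmFactors a c (gen b * x) (gen b * y) := by
  cases hL hx h with
  | refl => exact .refl _ _
  | braid hac z =>
    convert LcmFactors.braid hac (gen b * z) using 1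
    · rw [gen_comm_mul hbc, gen_comm_mul hab.symm]
    · rw [gen_comm_mul hab.symm, gen_comm_mul hbc]
  | comm hac z =>
    convert LcmFactors.comm hac (gen b * z) using 1
    · rw [gen_comm_mul hbc]
    · rw [gen_comm_mul hab.symm]

-- `v` and `v'` are kept apart so that both hypotheses can be split into cases.
theorem lcmFactors_trans {v' : ArtinMonoid G} (hL : LcmBelow G L) (hG : G.CliqueFree 3)
    (hlen : len v = L) (huv : LcmFactors a b u v) (hvw : LcmFactors b c v' w) (hv : v = v') :
    LcmFactors a c u w := by
  have hlen' : len v' = L := hv ▸ hlen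
  cases huv with
  | refl => exact hv ▸ hvw
  | braid hab x =>
    simp only [len_gen_mul] at hlen
    cases hvw with
    | refl => exact hv ▸ .braid hab x
    | braid hbc y => exact hL.lcmFactors_of_adj_adj hG hab hbc hlen hv
    | comm hbc y => exact hL.lcmFactors_of_adj_compl hab hbc hlen hv
  | comm hab x =>
    rw [len_gen_mul] at hlen
    cases hvw with
    | refl => exact hv ▸ .comm hab x
    | braid hbc y =>
      simp only [len_gen_mul] at hlen'
      exact (hL.lcmFactors_of_adj_compl hbc.symm hab.symm hlen' hv.symm).symm
    | comm hbc y => exact hL.lcmFactors_of_compl_compl hab hbc (by omega) hv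

theorem lcmFactors_of_rel (hL : LcmBelow G L) (hG : G.CliqueFree 3) {x y : FreeMonoid ι}
    (h : ConGen.Rel (ArtinRel G) x y) {a b : ι} {u v : FreeMonoid ι}
    (hx : x = .of a * u) (hy : y = .of b * v) (hu : u.length ≤ L) :
    LcmFactors a b (PresentedMonoid.mk (ArtinRel G) u) (PresentedMonoid.mk _ v) := by
  induction h generalizing a b u v with
  | of _ _ h => exact lcmFactors_of_artinRel h hx hy
  | refl =>
    obtain ⟨rfl, rfl⟩ := of_mul_inj (hx.symm.trans hy)
    exact .refl _ _
  | symm h ih =>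
    have hlen := length_eq_of_rel h
    simp only [hx, hy, FreeMonoid.length_mul, FreeMonoid.length_of] at hlen
    exact (ih hy hx (by omega)).symm
  | @trans _ m _ h _ ih₁ ih₂ =>
    have hlen := length_eq_of_rel h
    induction m using FreeMonoid.casesOn with
    | one => simp [hx] at hlen
    | of_mul c t =>
      simp only [hx, FreeMonoid.length_mul, FreeMonoid.length_of, add_right_inj] at hlen
      exact lcmFactors_trans (fun _ _ _ _ h ↦ hL (h.trans_le (hlen ▸ hu))) hG (len_mk t)
        (ih₁ hx rfl hu) (ih₂ rfl hy (hlen ▸ hu)) rfl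
  | @mul w x y z h h' ih₁ ih₂ =>
    have hlen := length_eq_of_rel h
    induction w using FreeMonoid.casesOn with
    | one =>
      obtain rfl := FreeMonoid.length_eq_zero.1 hlen.symm
      exact ih₂ (by simpa using hx) (by simpa using hy) hu
    | of_mul c t =>
      induction x using FreeMonoid.casesOn with
      | one => simp at hlen
      | of_mul d r =>
        rw [mul_assoc] at hx hy
        obtain ⟨rfl, rfl⟩ := of_mul_inj hx
        obtain ⟨rfl, rfl⟩ := of_mul_inj hy
        rw [FreeMonoid.length_mul] at hu
        rw [map_mul, map_mul, ← PresentedMonoid.mk_eq_mk_iff.2 h']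
        exact (ih₁ rfl rfl (by omega)).mul_right _

end LcmBelow

theorem lcmFactors_of_gen_mul_eq (hG : G.CliqueFree 3) {u v : ArtinMonoid G}
    (h : gen a * u = gen b * v) : LcmFactors a b u v := by
  induction hL : len u using Nat.strong_induction_on generalizing a b u v with | _ L ih
  have hbelow : LcmBelow G L := fun _ _ _ _ hlt h ↦ ih _ hlt h rfl
  induction u using PresentedMonoid.inductionOn with | _ x
  induction v using PresentedMonoid.inductionOn with | _ y
  exact hbelow.lcmFactors_of_rel hG (PresentedMonoid.mk_eq_mk_iff.1 h) rfl rfl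
    (by rw [← hL, len_mk])

theorem isLeftCancelMul (hG : G.CliqueFree 3) : IsLeftCancelMul (ArtinMonoid G) where
  mul_left_cancel x u v h := by
    induction x using gen_induction with
    | one => simpa using h
    | gen_mul a x ih =>
      refine ih ((lcmFactors_of_gen_mul_eq hG ?_).eq_of_self (a := a))
      simpa only [mul_assoc] using h

theorem gen_injective (hG : G.CliqueFree 3) :
    Function.Injective (gen : ι → ArtinMonoid G) := by
  intro a b h
  obtain rfl | hab | hab := eq_or_adj_or_compl_adj G a b
  · rfl
  · obtain ⟨w, hw, -⟩ := (lcmFactors_of_gen_mul_eq hG (congrArg (· * 1) h)).exists_of_adj hab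
    have := congrArg len hw
    simp only [len_gen_mul, len_one] at this
    omega
  · obtain ⟨w, hw, -⟩ :=
      (lcmFactors_of_gen_mul_eq hG (congrArg (· * 1) h)).exists_of_compl_adj hab
    have := congrArg len hw
    simp only [len_gen_mul, len_one] at this
    omega

theorem gen_mul_gen_dvd_of_adj (hG : G.CliqueFree 3) (hab : G.Adj a b) {y : ArtinMonoid G}
    (h : gen a ∣ gen b * y) : gen a * gen b ∣ y := by
  obtain ⟨z, hz⟩ := h
  obtain ⟨w, rfl, -⟩ := (lcmFactors_of_gen_mul_eq hG hz).exists_of_adj hab.symm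
  exact ⟨w, (mul_assoc _ _ _).symm⟩

theorem gen_dvd_of_compl_adj (hG : G.CliqueFree 3) (hab : Gᶜ.Adj a b) {y : ArtinMonoid G}
    (h : gen a ∣ gen b * y) : gen a ∣ y := by
  obtain ⟨z, hz⟩ := h
  obtain ⟨w, rfl, -⟩ := (lcmFactors_of_gen_mul_eq hG hz).exists_of_compl_adj hab.symm
  exact ⟨w, rfl⟩

theorem gen_dvd_of_forall_gen_mul_eq (hG : G.CliqueFree 3) (hconn : G.Preconnected)
    {m : ArtinMonoid G} (hm : m ≠ 1) (f : ι → ι) (hf : ∀ a, gen a * m = m * gen (f a)) (b : ι) :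
    gen b ∣ m := by
  have := isLeftCancelMul hG
  obtain ⟨a, y, hy⟩ := (eq_one_or_exists_eq_gen_mul m).resolve_left hm
  induction (SimpleGraph.reachable_iff_reflTransGen a b).1 (hconn a b) with
  | refl => exact ⟨y, hy⟩
  | @tail c d _ hcd ih =>
    -- Both `gen c` and `gen d` divide `gen d * m`, hence so does their least common multiple.
    obtain ⟨w, hw⟩ : gen c * gen d ∣ m := gen_mul_gen_dvd_of_adj hG hcd (hf d ▸ ih.mul_right _)
    have hcm := hf c
    nth_rw 2 [hw] at hcm
    simp only [mul_assoc] at hcm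
    exact ⟨_, mul_left_cancel hcm⟩

end ArtinMonoid

/-! ### Coxeter and Garside elements -/

section BraidSeq

variable {M : Type*} [Monoid M] {t : ℕ → M} {N i j k : ℕ}

/-- `t 0, …, t (N - 1)` satisfy the relations of the standard generators of the braid group on
`N + 1` strands. The values of `t` from `N` on are irrelevant; indexing by `ℕ` lets the proofs
pass freely to `t 1, …, t (N - 1)`. -/
structure IsBraidSeq (t : ℕ → M) (N : ℕ) : Prop where
  braid (i : ℕ) : i + 1 < N → t i * (t (i + 1) * t i) = t (i + 1) * (t i * t (i + 1))
  comm (i j : ℕ) : i + 2 ≤ j → j < N → t i * t j = t j * t i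

/-- The Coxeter element `t 0 * t 1 * ⋯ * t (k - 1)`. -/
def coxeterProd (t : ℕ → M) (k : ℕ) : M := ((List.range k).map t).prod

/-- Garside's fundamental element of `t 0, …, t (k - 1)`, obtained from that of
`t 1, …, t (k - 1)` by right multiplication with the Coxeter element. -/
def garside : (ℕ → M) → ℕ → M
  | _, 0 => 1
  | t, k + 1 => garside (fun i ↦ t (i + 1)) k * coxeterProd t (k + 1)

@[simp]
theorem coxeterProd_zero : coxeterProd t 0 = 1 := rfl

theorem coxeterProd_succ : coxeterProd t (k + 1) = coxeterProd t k * t k :=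
  List.prod_range_succ t k

theorem coxeterProd_succ' :
    coxeterProd t (k + 1) = t 0 * coxeterProd (fun i ↦ t (i + 1)) k :=
  List.prod_range_succ' t k

theorem map_coxeterProd {M' : Type*} [Monoid M'] (f : M →* M') (t : ℕ → M) (k : ℕ) :
    f (coxeterProd t k) = coxeterProd (fun i ↦ f (t i)) k := by
  rw [coxeterProd, coxeterProd, map_list_prod, List.map_map]
  rfl

theorem coxeterProd_mem {S : Submonoid M} (h : ∀ i < k, t i ∈ S) : coxeterProd t k ∈ S :=
  S.list_prod_mem <| by simpa using h

theorem garside_mem {S : Submonoid M} (h : ∀ i < k, t i ∈ S) : garside t k ∈ S := by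
  induction k generalizing t with
  | zero => exact S.one_mem
  | succ k ih => exact S.mul_mem (ih fun i hi ↦ h _ (by omega)) (coxeterProd_mem h)

theorem commute_coxeterProd {x : M} (h : ∀ i < k, Commute x (t i)) :
    Commute x (coxeterProd t k) :=
  Commute.list_prod_right _ _ <| by simpa using h

theorem commute_garside {x : M} (h : ∀ i < k, Commute x (t i)) : Commute x (garside t k) := by
  have hmem : garside t k ∈ Submonoid.centralizer {x} :=
    garside_mem fun i hi ↦ by simpa [Submonoid.mem_centralizer_iff] using (h i hi).eq
  exact Submonoid.mem_centralizer_iff.1 hmem x rfl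

namespace IsBraidSeq

theorem shift (h : IsBraidSeq t (N + 1)) : IsBraidSeq (fun i ↦ t (i + 1)) N where
  braid i hi := h.braid (i + 1) (by omega)
  comm i j hij hj := h.comm (i + 1) (j + 1) (by omega) (by omega)

theorem commute_coxeterProd_shift (h : IsBraidSeq t N) (hk : k + 2 ≤ N) :
    Commute (t 0) (coxeterProd (fun i ↦ t (i + 2)) k) :=
  commute_coxeterProd fun i hi ↦ h.comm 0 (i + 2) (by omega) (by omega)

theorem commute_garside_shift (h : IsBraidSeq t N) (hk : k + 2 ≤ N) :
    Commute (t 0) (garside (fun i ↦ t (i + 2)) k) :=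
  commute_garside fun i hi ↦ h.comm 0 (i + 2) (by omega) (by omega)

theorem coxeterProd_mul (h : IsBraidSeq t N) (hi : i + 1 < N) :
    coxeterProd t N * t i = t (i + 1) * coxeterProd t N := by
  induction N generalizing t i with
  | zero => omega
  | succ N ih =>
    cases i with
    | zero =>
      obtain ⟨k, rfl⟩ : ∃ k, N = k + 1 := ⟨N - 1, by omega⟩
      have hcomm := (h.commute_coxeterProd_shift le_rfl).eq
      rw [coxeterProd_succ', coxeterProd_succ']
      calc t 0 * (t 1 * coxeterProd (fun i ↦ t (i + 2)) k) * t 0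
          = t 0 * (t 1 * t 0) * coxeterProd (fun i ↦ t (i + 2)) k := by
            simp only [mul_assoc, hcomm]
        _ = t 1 * (t 0 * (t 1 * coxeterProd (fun i ↦ t (i + 2)) k)) := by
            rw [h.braid 0 hi]
            simp only [mul_assoc]
    | succ i =>
      have hcomm := h.comm 0 (i + 2) (by omega) (by omega)
      rw [coxeterProd_succ', mul_assoc, ih h.shift (by omega), ← mul_assoc, hcomm, mul_assoc]

theorem coxeterProd_mul_coxeterProd (h : IsBraidSeq t N) (hj : j < N) :
    coxeterProd t N * coxeterProd t j = coxeterProd (fun i ↦ t (i + 1)) j * coxeterProd t N := by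
  induction j with
  | zero => simp
  | succ j ih =>
    rw [coxeterProd_succ, ← mul_assoc, ih (by omega), mul_assoc, h.coxeterProd_mul hj,
      coxeterProd_succ, mul_assoc]

theorem coxeterProd_sq_mul (h : IsBraidSeq t (k + 1)) :
    coxeterProd t (k + 1) ^ 2 * t k = t 0 * coxeterProd t (k + 1) ^ 2 := by
  calc coxeterProd t (k + 1) ^ 2 * t k
      = t 0 * (coxeterProd (fun i ↦ t (i + 1)) k * coxeterProd t (k + 1)) * t k := by
        rw [sq]
        nth_rw 1 [coxeterProd_succ']
        simp only [mul_assoc]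
    _ = t 0 * (coxeterProd t (k + 1) * (coxeterProd t k * t k)) := by
        rw [← h.coxeterProd_mul_coxeterProd (Nat.lt_succ_self k)]
        simp only [mul_assoc]
    _ = t 0 * coxeterProd t (k + 1) ^ 2 := by rw [← coxeterProd_succ, sq]

theorem coxeterProd_pow_mul (h : IsBraidSeq t N) (hij : i + j < N) :
    coxeterProd t N ^ j * t i = t (i + j) * coxeterProd t N ^ j := by
  induction j generalizing i with
  | zero => simp
  | succ j ih =>
    rw [pow_succ, mul_assoc, h.coxeterProd_mul (by omega), ← mul_assoc, ih (by omega), mul_assoc,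
      show i + 1 + j = i + (j + 1) by omega]

theorem commute_coxeterProd_pow (h : IsBraidSeq t N) (hi : i < N) :
    Commute (coxeterProd t N ^ (N + 1)) (t i) := by
  obtain ⟨k, rfl⟩ : ∃ k, N = i + k + 1 := ⟨N - i - 1, by omega⟩
  set c := coxeterProd t (i + k + 1)
  -- The powers of `c` carry `t i` to `t (i + k)`, then to `t 0`, and finally back to `t i`.
  have hlast : c ^ k * t i = t (i + k) * c ^ k := h.coxeterProd_pow_mul (by omega)
  have hwrap : c ^ 2 * t (i + k) = t 0 * c ^ 2 := h.coxeterProd_sq_mul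
  have hback : c ^ i * t 0 = t i * c ^ i := by
    simpa using h.coxeterProd_pow_mul (i := 0) (j := i) (by omega)
  calc c ^ (i + k + 1 + 1) * t i = c ^ i * (c ^ 2 * (c ^ k * t i)) := by
        rw [← mul_assoc, ← mul_assoc, ← pow_add, ← pow_add, show i + 2 + k = i + k + 1 + 1 by omega]
    _ = t i * (c ^ i * (c ^ 2 * c ^ k)) := by
        rw [hlast, ← mul_assoc (c ^ 2), hwrap, mul_assoc, ← mul_assoc, hback, mul_assoc]
    _ = t i * c ^ (i + k + 1 + 1) := by
        rw [← pow_add, ← pow_add, show i + (2 + k) = i + k + 1 + 1 by omega]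

theorem zero_mul_garside (h : IsBraidSeq t (k + 1)) :
    t 0 * garside t (k + 1) = garside t (k + 1) * t k := by
  cases k with
  | zero => simp [garside, coxeterProd]
  | succ k =>
    set c := coxeterProd t (k + 2)
    set c' := coxeterProd (fun i ↦ t (i + 1)) (k + 1)
    set d := garside (fun i ↦ t (i + 2)) k
    have hd : t 0 * d = d * t 0 := (h.commute_garside_shift le_rfl).eq
    have hswap : c * coxeterProd t (k + 1) = c' * c := h.coxeterProd_mul_coxeterProd (by omega)
    calc t 0 * (d * c' * c) = d * (t 0 * c') * c := by simp only [← mul_assoc, hd]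
      _ = d * (c * (coxeterProd t (k + 1) * t (k + 1))) := by
          rw [← coxeterProd_succ', ← coxeterProd_succ, mul_assoc]
      _ = d * c' * c * t (k + 1) := by simp only [← mul_assoc, hswap]

theorem mul_garside (h : IsBraidSeq t N) (hij : i + j + 1 = N) :
    t i * garside t N = garside t N * t j := by
  subst hij
  induction i generalizing t with
  | zero =>
    rw [Nat.zero_add] at h ⊢
    exact h.zero_mul_garside
  | succ i ih =>
    rw [show i + 1 + j + 1 = i + j + 1 + 1 by omega] at h ⊢
    rw [garside, ← mul_assoc, ih h.shift, mul_assoc, ← h.coxeterProd_mul (by omega), mul_assoc]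

theorem zero_dvd_garside (h : IsBraidSeq t (k + 1)) : t 0 ∣ garside t (k + 1) := by
  cases k with
  | zero => simp [garside, coxeterProd]
  | succ k =>
    rw [garside, garside, mul_assoc, ← h.coxeterProd_mul_coxeterProd (by omega : k + 1 < k + 2),
      coxeterProd_succ', mul_assoc, ← mul_assoc, ← (h.commute_garside_shift le_rfl).eq, mul_assoc]
    exact dvd_mul_right _ _

theorem dvd_garside (h : IsBraidSeq t N) (hi : i < N) : t i ∣ garside t N := by
  induction N generalizing t i with
  | zero => omega
  | succ k ih =>
    cases i with
    | zero => exact h.zero_dvd_garside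
    | succ i => exact (ih h.shift (by omega)).mul_right _

theorem commute_garside_sq (h : IsBraidSeq t N) (hi : i < N) :
    Commute (t i) (garside t N ^ 2) := by
  rw [Commute, SemiconjBy, sq, ← mul_assoc,
    h.mul_garside (i := i) (j := N - 1 - i) (by omega), mul_assoc,
    h.mul_garside (i := N - 1 - i) (j := i) (by omega), mul_assoc]

end IsBraidSeq

/-- A sequence satisfying the braid relations in which, for `i < j`, the common value of the two
sides of the relation between `t i` and `t j` is their least common right multiple. In both axioms
the left factor `t j` of this multiple has been cancelled. -/
structure IsLcmBraidSeq (t : ℕ → M) (N : ℕ) : Prop extends IsBraidSeq t N where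
  mul_dvd_of_dvd (i : ℕ) (y : M) : i + 1 < N → t i ∣ t (i + 1) * y → t i * t (i + 1) ∣ y
  dvd_of_dvd (i j : ℕ) (y : M) : i + 2 ≤ j → j < N → t i ∣ t j * y → t i ∣ y

/-- The submonoid of the elements `x` that can be cancelled from `a ∣ x * y`. -/
def dvdCancelSubmonoid (a : M) : Submonoid M where
  carrier := {x | ∀ y, a ∣ x * y → a ∣ y}
  one_mem' y h := by rwa [one_mul] at h
  mul_mem' hx hx' y h := hx' _ <| hx _ <| by rwa [← mul_assoc]

namespace IsLcmBraidSeq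

theorem shift (h : IsLcmBraidSeq t (N + 1)) : IsLcmBraidSeq (fun i ↦ t (i + 1)) N where
  __ := h.toIsBraidSeq.shift
  mul_dvd_of_dvd i y hi := h.mul_dvd_of_dvd (i + 1) y (by omega)
  dvd_of_dvd i j y hij hj := h.dvd_of_dvd (i + 1) (j + 1) y (by omega) (by omega)

variable [IsLeftCancelMul M]

theorem coxeterProd_dvd (h : IsLcmBraidSeq t (k + 1)) {y : M}
    (hy : t 0 ∣ coxeterProd (fun i ↦ t (i + 1)) k * y) : coxeterProd t (k + 1) ∣ y := by
  induction k generalizing t y with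
  | zero => simpa [coxeterProd] using hy
  | succ k ih =>
    rw [coxeterProd_succ', mul_assoc] at hy
    obtain ⟨z, hz⟩ := h.mul_dvd_of_dvd 0 _ (by omega) hy
    have hmem : coxeterProd (fun i ↦ t (i + 2)) k ∈ dvdCancelSubmonoid (t 0) :=
      coxeterProd_mem fun i hi y ↦ h.dvd_of_dvd 0 (i + 2) y (by omega) (by omega)
    obtain ⟨y, rfl⟩ := hmem y ⟨t 1 * z, by rw [← mul_assoc]; exact hz⟩
    rw [← mul_assoc, ← (h.commute_coxeterProd_shift le_rfl).eq, mul_assoc, mul_assoc] at hz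
    rw [coxeterProd_succ']
    exact mul_dvd_mul_left _ (ih h.shift ⟨z, mul_left_cancel hz⟩)

theorem garside_dvd (h : IsLcmBraidSeq t N) {m : M} (hm : ∀ i < N, t i ∣ m) :
    garside t N ∣ m := by
  induction N generalizing t with
  | zero => exact one_dvd m
  | succ k ih =>
    obtain ⟨y, rfl⟩ := ih h.shift fun i hi ↦ hm (i + 1) (by omega)
    refine mul_dvd_mul_left _ (h.coxeterProd_dvd ?_)
    have h0 := hm 0 (by omega)
    cases k with
    | zero => simpa [garside] using h0
    | succ k =>
      rw [garside, mul_assoc] at h0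
      have hmem : garside (fun i ↦ t (i + 2)) k ∈ dvdCancelSubmonoid (t 0) :=
        garside_mem fun i hi y ↦ h.dvd_of_dvd 0 (i + 2) y (by omega) (by omega)
      exact hmem _ h0

end IsLcmBraidSeq

end BraidSeq

/-! ### Central elements and localization -/

section CentralLocalization

universe u

variable {M : Type u} [Monoid M] [IsLeftCancelMul M] {z : M}

theorem mem_center_of_mul_mem_center {m : M} (hz : z ∈ Submonoid.center M)
    (hzm : z * m ∈ Submonoid.center M) : m ∈ Submonoid.center M := by
  rw [Submonoid.mem_center_iff] at hz hzm ⊢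
  intro x
  have h := hzm x
  rw [← mul_assoc, hz, mul_assoc, mul_assoc] at h
  exact mul_left_cancel h

/-- The powers of a central element form an Ore set, with trivial exchange of numerator and
denominator. -/
abbrev oreSetPowersOfMemCenter (hz : z ∈ Submonoid.center M) :
    OreLocalization.OreSet (Submonoid.powers z) :=
  have hcomm (r : M) (s : Submonoid.powers z) : r * s = s * r :=
    Submonoid.mem_center_iff.1 (Submonoid.powers_le.2 hz s.2) r
  { ore_right_cancel r₁ r₂ s h := ⟨s, by rwa [← hcomm, ← hcomm]⟩
    oreNum r _ := r
    oreDenom _ s := s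
    ore_eq r s := (hcomm r s).symm }

theorem commute_of_mul_mem_center {x y : M} (h : x * y ∈ Submonoid.center M) : Commute x y :=
  mul_left_cancel (a := x) <| by rw [← mul_assoc x y x, Submonoid.mem_center_iff.1 h x]

theorem isUnit_map_of_dvd {L : Type*} [Monoid L] (f : M →* L) (hz : z ∈ Submonoid.center M)
    (hf : IsUnit (f z)) {x : M} (hx : x ∣ z) : IsUnit (f x) := by
  obtain ⟨y, rfl⟩ := hx
  rw [map_mul] at hf
  exact (((commute_of_mul_mem_center hz).map f).isUnit_mul_iff.1 hf).1

theorem exists_injective_isUnit_map (hz : z ∈ Submonoid.center M) :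
    ∃ (L : Type u) (_ : Monoid L) (f : M →* L), Function.Injective f ∧ IsUnit (f z) := by
  let := oreSetPowersOfMemCenter hz
  refine ⟨OreLocalization (Submonoid.powers z) M, inferInstance, OreLocalization.numeratorHom,
    fun x y h ↦ ?_, OreLocalization.numerator_isUnit ⟨z, Submonoid.mem_powers z⟩⟩
  obtain ⟨u, v, huv, hv⟩ := OreLocalization.oreDiv_eq_iff.1 h
  simp only [OneMemClass.coe_one, mul_one] at hv
  simp only [Submonoid.smul_def, smul_eq_mul, ← hv] at huv
  exact (mul_left_cancel huv).symm

end CentralLocalization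

section CenterOfFractions

variable {M G : Type*} [Monoid M] [Group G] {φ : M →* G} {S : Set M} {z : M}

theorem map_mem_center_of_closure_image_eq_top (hS : Subgroup.closure (φ '' S) = ⊤)
    (hz : z ∈ Submonoid.center M) : φ z ∈ Subgroup.center G := by
  have hle : Subgroup.closure (φ '' S) ≤ Subgroup.centralizer {φ z} := by
    rw [Subgroup.closure_le]
    rintro _ ⟨x, -, rfl⟩
    rw [SetLike.mem_coe, Subgroup.mem_centralizer_singleton_iff, ← map_mul, ← map_mul,
      Submonoid.mem_center_iff.1 hz x]
  exact Subgroup.mem_center_iff.2 fun g ↦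
    Subgroup.mem_centralizer_singleton_iff.1 (hle (hS ▸ Subgroup.mem_top g))

theorem exists_pow_mul_eq_map (hS : Subgroup.closure (φ '' S) = ⊤) (hz : z ∈ Submonoid.center M)
    (hdvd : ∀ s ∈ S, s ∣ z) (g : G) : ∃ k m, φ z ^ k * g = φ m := by
  have hφz := map_mem_center_of_closure_image_eq_top hS hz
  have hg : g ∈ Subgroup.closure (φ '' S) := hS ▸ Subgroup.mem_top g
  induction hg using Subgroup.closure_induction'' with
  | one => exact ⟨0, 1, by simp⟩
  | mem x hx =>
    obtain ⟨s, -, rfl⟩ := hx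
    exact ⟨0, s, by simp⟩
  | inv_mem x hx =>
    obtain ⟨s, hs, rfl⟩ := hx
    obtain ⟨y, rfl⟩ := hdvd s hs
    refine ⟨1, y, ?_⟩
    rw [pow_one, ← Subgroup.mem_center_iff.1 hφz, map_mul, inv_mul_cancel_left]
  | mul x y _ _ hx hy =>
    obtain ⟨k, m, hm⟩ := hx
    obtain ⟨l, m', hm'⟩ := hy
    have hcomm := Subgroup.mem_center_iff.1 (Subgroup.pow_mem _ hφz l) x
    refine ⟨k + l, m * m', ?_⟩
    rw [map_mul, ← hm, ← hm', pow_add, mul_assoc, ← mul_assoc _ x, ← hcomm]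
    simp only [mul_assoc]

theorem center_eq_zpowers_of_center_eq_powers (hφ : Function.Injective φ)
    (hS : Subgroup.closure (φ '' S) = ⊤) (hdvd : ∀ s ∈ S, s ∣ z)
    (hM : Submonoid.center M = Submonoid.powers z) :
    Subgroup.center G = Subgroup.zpowers (φ z) := by
  have hz : z ∈ Submonoid.center M := hM ▸ Submonoid.mem_powers z
  have hφz := map_mem_center_of_closure_image_eq_top hS hz
  refine le_antisymm (fun g hg ↦ ?_) (Subgroup.zpowers_le.2 hφz)
  obtain ⟨k, m, hm⟩ := exists_pow_mul_eq_map hS hz hdvd g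
  have hφm : φ m ∈ Subgroup.center G := hm ▸ mul_mem (pow_mem hφz k) hg
  have hmc : m ∈ Submonoid.center M := Submonoid.mem_center_iff.2 fun x ↦ hφ <| by
    rw [map_mul, map_mul, Subgroup.mem_center_iff.1 hφm]
  obtain ⟨l, rfl⟩ : m ∈ Submonoid.powers z := hM ▸ hmc
  rw [eq_inv_mul_of_mul_eq hm, map_pow]
  exact mul_mem (inv_mem (Subgroup.npow_mem_zpowers _ _)) (Subgroup.npow_mem_zpowers _ _)

end CenterOfFractions

/-! ### The monoid of positive braids -/

namespace ArtinMonoid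

variable {ι : Type*} {G : SimpleGraph ι} {t : ℕ → ArtinMonoid G} {k : ℕ}

theorem len_coxeterProd (h : ∀ i < k, len (t i) = 1) : len (coxeterProd t k) = k := by
  induction k with
  | zero => simp
  | succ k ih => rw [coxeterProd_succ, len_mul, ih fun i hi ↦ h i (by omega), h k (by omega)]

theorem two_mul_len_garside (h : ∀ i < k, len (t i) = 1) :
    2 * len (garside t k) = k * (k + 1) := by
  induction k generalizing t with
  | zero => simp [garside]
  | succ k ih =>
    rw [garside, len_mul, len_coxeterProd h, mul_add, ih fun i hi ↦ h (i + 1) (by omega)]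
    ring

end ArtinMonoid

/-- The monoid of positive braids on `N + 1` strands. -/
abbrev BraidMonoid (N : ℕ) := ArtinMonoid (SimpleGraph.pathGraph N)

namespace BraidMonoid

open ArtinMonoid

variable {N : ℕ}

theorem cliqueFree_pathGraph (N : ℕ) : (SimpleGraph.pathGraph N).CliqueFree 3 :=
  (SimpleGraph.pathGraph.bicoloring N).colorable.cliqueFree (by simp)

instance : IsLeftCancelMul (BraidMonoid N) := isLeftCancelMul (cliqueFree_pathGraph N)

theorem pathGraph_adj_of_add_one_eq {i j : Fin N} (h : (i : ℕ) + 1 = j) :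
    (SimpleGraph.pathGraph N).Adj i j :=
  SimpleGraph.pathGraph_adj.2 (.inl h)

theorem compl_pathGraph_adj_of_add_two_le {i j : Fin N} (h : (i : ℕ) + 2 ≤ j) :
    (SimpleGraph.pathGraph N)ᶜ.Adj i j := by
  rw [SimpleGraph.compl_adj, SimpleGraph.pathGraph_adj, ne_eq, Fin.ext_iff]
  omega

/-- The generators of the braid monoid, indexed from `0`, with junk value `1` out of range. -/
def sigma (N k : ℕ) : BraidMonoid N := if h : k < N then gen ⟨k, h⟩ else 1

theorem sigma_of_lt {k : ℕ} (h : k < N) : sigma N k = gen ⟨k, h⟩ := dif_pos h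

theorem sigma_val (a : Fin N) : sigma N a = gen a := sigma_of_lt a.2

theorem len_sigma {k : ℕ} (h : k < N) : len (sigma N k) = 1 := by
  rw [sigma_of_lt h, len_gen]

theorem isLcmBraidSeq_sigma (N : ℕ) : IsLcmBraidSeq (sigma N) N where
  braid i hi := by
    rw [sigma_of_lt hi, sigma_of_lt (by omega : i < N)]
    exact gen_braid (pathGraph_adj_of_add_one_eq rfl)
  comm i j hij hj := by
    rw [sigma_of_lt hj, sigma_of_lt (by omega : i < N)]
    exact gen_comm (compl_pathGraph_adj_of_add_two_le hij)
  mul_dvd_of_dvd i y hi := by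
    rw [sigma_of_lt hi, sigma_of_lt (by omega : i < N)]
    exact gen_mul_gen_dvd_of_adj (cliqueFree_pathGraph N) (pathGraph_adj_of_add_one_eq rfl)
  dvd_of_dvd i j y hij hj := by
    rw [sigma_of_lt hj, sigma_of_lt (by omega : i < N)]
    exact gen_dvd_of_compl_adj (cliqueFree_pathGraph N) (compl_pathGraph_adj_of_add_two_le hij)

/-- Garside's half twist `Δ`. -/
def halfTwist (N : ℕ) : BraidMonoid N := garside (sigma N) N

/-- The full twist, as a power of a Coxeter element. -/
def fullTwist (N : ℕ) : BraidMonoid N := coxeterProd (sigma N) N ^ (N + 1)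

theorem two_mul_len_halfTwist (N : ℕ) : 2 * len (halfTwist N) = N * (N + 1) :=
  two_mul_len_garside fun _ ↦ len_sigma

theorem len_fullTwist (N : ℕ) : len (fullTwist N) = N * (N + 1) := by
  rw [fullTwist, len_pow, len_coxeterProd fun _ ↦ len_sigma, mul_comm]

theorem gen_mul_halfTwist (a : Fin N) : gen a * halfTwist N = halfTwist N * gen a.rev := by
  rw [← sigma_val, ← sigma_val]
  exact (isLcmBraidSeq_sigma N).mul_garside (by rw [Fin.val_rev]; omega)

theorem gen_dvd_halfTwist (a : Fin N) : gen a ∣ halfTwist N := by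
  rw [← sigma_val]
  exact (isLcmBraidSeq_sigma N).dvd_garside a.2

theorem halfTwist_sq_mem_center (N : ℕ) : halfTwist N ^ 2 ∈ Submonoid.center (BraidMonoid N) :=
  Submonoid.mem_center_iff.2 <| commute_of_forall_gen fun a ↦
    sigma_val a ▸ (isLcmBraidSeq_sigma N).commute_garside_sq a.2

theorem fullTwist_mem_center (N : ℕ) : fullTwist N ∈ Submonoid.center (BraidMonoid N) :=
  Submonoid.mem_center_iff.2 <| commute_of_forall_gen fun a ↦
    sigma_val a ▸ ((isLcmBraidSeq_sigma N).commute_coxeterProd_pow a.2).symm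

theorem halfTwist_dvd {m : BraidMonoid N} (hm : m ≠ 1) (f : Fin N → Fin N)
    (hf : ∀ a, gen a * m = m * gen (f a)) : halfTwist N ∣ m :=
  (isLcmBraidSeq_sigma N).garside_dvd fun i hi ↦ sigma_of_lt hi ▸
    gen_dvd_of_forall_gen_mul_eq (cliqueFree_pathGraph N) (SimpleGraph.pathGraph_preconnected N)
      hm f hf ⟨i, hi⟩

theorem gen_mul_of_halfTwist_mul_mem_center {m : BraidMonoid N}
    (hm : halfTwist N * m ∈ Submonoid.center (BraidMonoid N)) (a : Fin N) :
    gen a * m = m * gen a.rev := by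
  have h := Submonoid.mem_center_iff.1 hm (gen a.rev)
  rw [← mul_assoc, gen_mul_halfTwist, Fin.rev_rev, mul_assoc, mul_assoc] at h
  exact mul_left_cancel h

theorem halfTwist_sq_dvd (hN : 2 ≤ N) {m : BraidMonoid N}
    (hm : m ∈ Submonoid.center (BraidMonoid N)) (hm1 : m ≠ 1) : halfTwist N ^ 2 ∣ m := by
  obtain ⟨m, rfl⟩ := halfTwist_dvd hm1 id fun a ↦ Submonoid.mem_center_iff.1 hm (gen a)
  have hrev := gen_mul_of_halfTwist_mul_mem_center hm
  rw [sq]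
  refine mul_dvd_mul_left _ (halfTwist_dvd ?_ Fin.rev hrev)
  rintro rfl
  have h := gen_injective (cliqueFree_pathGraph N) <|
    (mul_one _).symm.trans <| (hrev ⟨0, by omega⟩).trans (one_mul _)
  rw [Fin.ext_iff, Fin.val_rev] at h
  dsimp only at h
  omega

theorem mem_powers_halfTwist_sq (hN : 2 ≤ N) {m : BraidMonoid N}
    (hm : m ∈ Submonoid.center (BraidMonoid N)) : m ∈ Submonoid.powers (halfTwist N ^ 2) := by
  induction hL : len m using Nat.strong_induction_on generalizing m with | _ L ih
  by_cases hm1 : m = 1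
  · exact hm1 ▸ one_mem _
  obtain ⟨m, rfl⟩ := halfTwist_sq_dvd hN hm hm1
  have hpos : 0 < N * (N + 1) := by positivity
  have hlen := two_mul_len_halfTwist N
  rw [len_mul, len_pow] at hL
  exact mul_mem (Submonoid.mem_powers _)
    (ih (len m) (by omega) (mem_center_of_mul_mem_center (halfTwist_sq_mem_center N) hm) rfl)

theorem fullTwist_eq_halfTwist_sq (hN : 2 ≤ N) : fullTwist N = halfTwist N ^ 2 := by
  obtain ⟨k, hk⟩ := mem_powers_halfTwist_sq hN (fullTwist_mem_center N)
  have hlen := congrArg len hk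
  simp only [len_pow, len_fullTwist, two_mul_len_halfTwist] at hlen
  have hpos : 0 < N * (N + 1) := by positivity
  obtain rfl : k = 1 := Nat.eq_of_mul_eq_mul_right hpos (hlen.trans (one_mul _).symm)
  exact hk.symm.trans (pow_one _)

theorem center_eq_powers_fullTwist (hN : 2 ≤ N) :
    Submonoid.center (BraidMonoid N) = Submonoid.powers (fullTwist N) := by
  refine le_antisymm (fun m hm ↦ ?_) (Submonoid.powers_le.2 (fullTwist_mem_center N))
  exact fullTwist_eq_halfTwist_sq hN ▸ mem_powers_halfTwist_sq hN hm

theorem gen_dvd_fullTwist (hN : 2 ≤ N) (a : Fin N) : gen a ∣ fullTwist N := by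
  rw [fullTwist_eq_halfTwist_sq hN, sq]
  exact (gen_dvd_halfTwist a).mul_right _

end BraidMonoid

/-! ### The braid group -/

namespace BraidGroup

open ArtinMonoid BraidMonoid

variable {n : ℕ}

theorem of_braid {i j : Fin (n - 1)} (h : (i : ℕ) + 1 = j) :
    (PresentedGroup.of i * (PresentedGroup.of j * PresentedGroup.of i) : BraidGroup n) =
      PresentedGroup.of j * (PresentedGroup.of i * PresentedGroup.of j) := by
  have := PresentedGroup.mk_eq_mk_of_mul_inv_mem (rels := braidRels n) (.inl ⟨i, j, h, rfl⟩)
  simp only [map_mul, mul_assoc] at this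
  exact this

theorem of_comm {i j : Fin (n - 1)} (h : (i : ℕ) + 2 ≤ j) :
    (PresentedGroup.of i * PresentedGroup.of j : BraidGroup n) =
      PresentedGroup.of j * PresentedGroup.of i := by
  have := PresentedGroup.mk_eq_mk_of_mul_inv_mem (rels := braidRels n) (.inr ⟨i, j, h, rfl⟩)
  rwa [map_mul, map_mul] at this

/-- The canonical map from positive braids to braids. -/
def ofPositive (n : ℕ) : BraidMonoid (n - 1) →* BraidGroup n :=
  ArtinMonoid.lift PresentedGroup.of
    (fun i j h ↦ (SimpleGraph.pathGraph_adj.1 h).elim of_braid fun h ↦ (of_braid h).symm)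
    (fun i j h ↦ by
      rw [SimpleGraph.compl_adj, SimpleGraph.pathGraph_adj, ne_eq, Fin.ext_iff] at h
      obtain h | h : (i : ℕ) + 2 ≤ j ∨ (j : ℕ) + 2 ≤ i := by omega
      · exact of_comm h
      · exact (of_comm h).symm)

theorem ofPositive_gen (i : Fin (n - 1)) : ofPositive n (gen i) = PresentedGroup.of i := rfl

theorem exists_forall_ofPositive_eq {L : Type*} [Monoid L] (f : BraidMonoid (n - 1) →* L)
    (hf : ∀ i, IsUnit (f (gen i))) :
    ∃ g : BraidGroup n →* Lˣ, ∀ x, (g (ofPositive n x) : L) = f x := by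
  have hrels : ∀ r ∈ braidRels n, FreeGroup.lift (fun i ↦ (hf i).unit) r = 1 := by
    rintro _ (⟨i, j, h, rfl⟩ | ⟨i, j, h, rfl⟩) <;>
      rw [map_mul, map_inv, mul_inv_eq_one, Units.ext_iff] <;>
      simp only [map_mul, FreeGroup.lift_apply_of, Units.val_mul, IsUnit.unit_spec] <;>
      simp only [← map_mul, mul_assoc]
    · rw [gen_braid (pathGraph_adj_of_add_one_eq h)]
    · rw [gen_comm (compl_pathGraph_adj_of_add_two_le h)]
  refine ⟨PresentedGroup.toGroup hrels, fun x ↦ ?_⟩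
  induction x using gen_induction with
  | one => simp
  | gen_mul i x ih =>
    rw [map_mul, map_mul, map_mul, Units.val_mul, ih, ofPositive_gen, PresentedGroup.toGroup.of,
      IsUnit.unit_spec]

theorem ofPositive_injective (hn : 3 ≤ n) : Function.Injective (ofPositive n) := by
  have hN : 2 ≤ n - 1 := by omega
  obtain ⟨L, _, f, hf, hunit⟩ := exists_injective_isUnit_map (fullTwist_mem_center (n - 1))
  obtain ⟨g, hg⟩ := exists_forall_ofPositive_eq f fun i ↦
    isUnit_map_of_dvd f (fullTwist_mem_center _) hunit (gen_dvd_fullTwist hN i)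
  intro x y hxy
  exact hf <| by rw [← hg, ← hg, hxy]

theorem ofPositive_fullTwist (hn : n ≠ 0) :
    ofPositive n (fullTwist (n - 1)) =
      ((List.range (n - 1)).map fun t ↦ braidSigma n (t + 1)).prod ^ n := by
  have hsigma (t : ℕ) : ofPositive n (sigma (n - 1) t) = braidSigma n (t + 1) := by
    rw [sigma, braidSigma, apply_dite (ofPositive n), map_one]
    rfl
  rw [fullTwist, map_pow, map_coxeterProd, Nat.sub_one_add_one hn]
  simp only [hsigma, coxeterProd]

theorem center_eq_zpowers_ofPositive_fullTwist (hn : 3 ≤ n) :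
    Subgroup.center (BraidGroup n) = Subgroup.zpowers (ofPositive n (fullTwist (n - 1))) := by
  have hN : 2 ≤ n - 1 := by omega
  refine center_eq_zpowers_of_center_eq_powers (S := Set.range gen) (ofPositive_injective hn) ?_
    (Set.forall_mem_range.2 (gen_dvd_fullTwist hN)) (center_eq_powers_fullTwist hN)
  rw [← Set.range_comp]
  exact PresentedGroup.closure_range_of (braidRels n)

theorem not_isOfFinOrder_ofPositive_fullTwist (hn : 3 ≤ n) :
    ¬ IsOfFinOrder (ofPositive n (fullTwist (n - 1))) := by
  rw [isOfFinOrder_iff_pow_eq_one]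
  rintro ⟨k, hk, h⟩
  rw [← map_pow, ← map_one (ofPositive n)] at h
  have hlen := congrArg len (ofPositive_injective hn h)
  rw [len_pow, len_fullTwist, len_one] at hlen
  have : 0 < k * ((n - 1) * (n - 1 + 1)) :=
    Nat.mul_pos hk (Nat.mul_pos (by omega) (by omega))
  omega

end BraidGroup

/-- For `n ≥ 3`, the center of the braid group `B_n` is the subgroup generated by
the full twist `(σ_1 σ_2 ⋯ σ_{n-1})^n`, and this subgroup is infinite cyclic. -/
theorem braid_center_full_twist (n : ℕ) (hn : 3 ≤ n) :
    Subgroup.center (BraidGroup n) =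
      Subgroup.zpowers ((((List.range (n - 1)).map
        (fun t => braidSigma n (t + 1))).prod) ^ n) ∧
    Infinite (Subgroup.zpowers ((((List.range (n - 1)).map
        (fun t => braidSigma n (t + 1))).prod) ^ n)) ∧
    IsCyclic (Subgroup.zpowers ((((List.range (n - 1)).map
        (fun t => braidSigma n (t + 1))).prod) ^ n)) := by
  rw [← BraidGroup.ofPositive_fullTwist (by omega)]
  have hinf := infinite_zpowers.2 (BraidGroup.not_isOfFinOrder_ofPositive_fullTwist hn)
  exact ⟨BraidGroup.center_eq_zpowers_ofPositive_fullTwist hn, hinf.to_subtype, inferInstance⟩
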